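/- arXiv:math/0608766 — 2 statements merged into one kernel-verified Lean document; each statement's English description precedes it below -/
import Mathlib

section
/- For a positive integer n, define f(n) = n / sqfree(n), where sqfree(n) is the radical (squarefree kernel) of n. Then the natural density of the set {n : f(n) = q}, for a fixed positive integer q, equals (6/π²)·(1/q)·∏_{p | q} 1/(p+1). -/
/-!
Write `f n = n / rad n`, where `rad n = sqfreeKernel n`. For `q ≥ 1`, the solutions of `f n = q` are
exactly the numbers `n = q * rad q * m` with `m` squarefree and coprime to `q`, so the density
sought is `1 / (q * rad q)` times that of the admissible `m`.

The latter comes from a limit theorem, used twice: if `a 0 = 0` and `a n / n → D`, then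
`(∑ i, w i * a ⌊n / c i⌋) / n → D * ∑ i, w i / c i` whenever the last series converges absolutely.
Applied to `#{squarefree m ≤ n} = ∑ d, μ d * ⌊n / d²⌋` it gives `1 / ζ(2) = 6 / π²`.
If `p` is a prime not dividing `k`, then a squarefree number coprime to `k` is either `m` or `p * m`
with `m` squarefree and coprime to `p * k`. The counting functions `A` and `B` for the moduli `k`
and `p * k` thus satisfy `A n = B n + B ⌊n / p⌋`, that is, `B n = ∑ j, (-1) ^ j * A ⌊n / p ^ j⌋`,
and imposing coprimality to `p` multiplies the density by `∑ j, (-1) ^ j / p ^ j = p / (p + 1)`.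
-/

open Filter

/-- The radical (squarefree kernel) of `n`. -/
def sqfreeKernel (n : ℕ) : ℕ := ∏ p ∈ n.primeFactors, p

open Finset Topology UniqueFactorizationMonoid
open scoped ArithmeticFunction.Moebius

section LimitTheorem

theorem natCast_div_div_le_one_div (n c : ℕ) : ((n / c : ℕ) : ℝ) / n ≤ 1 / c := by
  rcases eq_or_ne n 0 with rfl | hn
  · simp
  · calc ((n / c : ℕ) : ℝ) / n ≤ (n / c) / n := by gcongr; exact Nat.cast_div_le
      _ = 1 / c := by field_simp

theorem tendsto_natCast_div_div_atTop (c : ℕ) :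
    Tendsto (fun n : ℕ ↦ ((n / c : ℕ) : ℝ) / n) atTop (𝓝 (1 / c)) := by
  have h := (tendsto_nat_floor_mul_div_atTop (R := ℝ) (a := 1 / c) (by positivity)).comp
    tendsto_natCast_atTop_atTop
  refine h.congr fun n ↦ ?_
  rw [Function.comp_apply, one_div_mul_eq_div, Nat.floor_div_natCast, Nat.floor_natCast]

variable {a : ℕ → ℝ} {D : ℝ}

theorem comp_div_div_eq_mul (ha₀ : a 0 = 0) (n c : ℕ) :
    a (n / c) / n = a (n / c) / (n / c : ℕ) * ((n / c : ℕ) / n) := by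
  rcases eq_or_ne (n / c) 0 with h | h
  · simp [h, ha₀]
  · have : ((n / c : ℕ) : ℝ) ≠ 0 := mod_cast h
    field_simp

theorem tendsto_comp_div_div_atTop (ha₀ : a 0 = 0)
    (ha : Tendsto (fun n ↦ a n / n) atTop (𝓝 D)) (c : ℕ) :
    Tendsto (fun n ↦ a (n / c) / n) atTop (𝓝 (D / c)) := by
  rcases eq_or_ne c 0 with rfl | hc
  · simp [ha₀]
  · simp_rw [comp_div_div_eq_mul ha₀]
    rw [← mul_one_div]
    exact (ha.comp (Nat.tendsto_div_const_atTop hc)).mul (tendsto_natCast_div_div_atTop c)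

theorem exists_abs_comp_div_div_le (ha₀ : a 0 = 0)
    (ha : Tendsto (fun n ↦ a n / n) atTop (𝓝 D)) :
    ∃ C, ∀ n c : ℕ, |a (n / c) / n| ≤ C / c := by
  obtain ⟨C, hC⟩ := (Metric.isBounded_range_of_tendsto _ ha).exists_norm_le
  have hC' (n : ℕ) : |a n / n| ≤ C := hC _ (Set.mem_range_self n)
  have hC₀ : 0 ≤ C := (abs_nonneg _).trans (hC' 0)
  refine ⟨C, fun n c ↦ ?_⟩
  calc |a (n / c) / n| = |a (n / c) / (n / c : ℕ)| * |((n / c : ℕ) : ℝ) / n| := by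
        rw [comp_div_div_eq_mul ha₀, abs_mul]
    _ ≤ C * (1 / c) := by
        gcongr
        · exact hC' _
        · rw [abs_of_nonneg (by positivity)]
          exact natCast_div_div_le_one_div n c
    _ = C / c := mul_one_div C _

theorem tendsto_tsum_mul_comp_div_div_atTop {ι : Type*} {w : ι → ℝ} {c : ι → ℕ} (ha₀ : a 0 = 0)
    (ha : Tendsto (fun n ↦ a n / n) atTop (𝓝 D)) (hw : Summable fun i ↦ w i / c i) :
    Tendsto (fun n : ℕ ↦ (∑' i, w i * a (n / c i)) / n) atTop (𝓝 (D * ∑' i, w i / c i)) := by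
  obtain ⟨C, hC⟩ := exists_abs_comp_div_div_le ha₀ ha
  simp_rw [← tsum_div_const, mul_div_assoc, ← tsum_mul_left]
  refine tendsto_tsum_of_dominated_convergence (hw.abs.mul_left C) (fun i ↦ ?_)
    (.of_forall fun n i ↦ ?_)
  · rw [mul_div_left_comm]
    exact (tendsto_comp_div_div_atTop ha₀ ha (c i)).const_mul (w i)
  · calc ‖w i * (a (n / c i) / n)‖ = |w i| * |a (n / c i) / n| := abs_mul _ _
      _ ≤ |w i| * (C / c i) := by gcongr; exact hC n (c i)
      _ = C * |w i / c i| := by rw [abs_div, Nat.abs_cast, mul_div_left_comm]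

end LimitTheorem

section AlternatingInversion

variable {p : ℕ}

theorem sum_neg_one_pow_mul_comp_div_pow {R : Type*} [CommRing R] {f g : ℕ → R}
    (h : ∀ n, f n = g n + g (n / p)) (n N : ℕ) :
    ∑ k ∈ range N, (-1) ^ k * f (n / p ^ k) = g n - (-1) ^ N * g (n / p ^ N) := by
  induction N with
  | zero => simp
  | succ N ih =>
    rw [sum_range_succ, ih, h, Nat.div_div_eq_div_mul, ← pow_succ]
    ring

theorem tsum_neg_one_pow_mul_comp_div_pow {f g : ℕ → ℝ} (hp : 1 < p) (hg₀ : g 0 = 0)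
    (h : ∀ n, f n = g n + g (n / p)) (n : ℕ) :
    ∑' k, (-1) ^ k * f (n / p ^ k) = g n := by
  have hdiv {k : ℕ} (hk : n ≤ k) : n / p ^ k = 0 :=
    Nat.div_eq_of_lt (hk.trans_lt (Nat.lt_pow_self hp))
  rw [tsum_eq_sum (s := range n), sum_neg_one_pow_mul_comp_div_pow h, hdiv le_rfl, hg₀, mul_zero,
    sub_zero]
  intro k hk
  simp [hdiv (not_lt.1 (mem_range.not.1 hk)), h, hg₀]

theorem hasSum_neg_one_pow_div_pow (hp : 1 < p) :
    HasSum (fun k : ℕ ↦ (-1 : ℝ) ^ k / (p ^ k : ℕ)) (p / (p + 1)) := by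
  have hp' : (1 : ℝ) < p := mod_cast hp
  have hnorm : ‖(-1 / p : ℝ)‖ < 1 := by
    rw [norm_div, norm_neg, norm_one, RCLike.norm_natCast]
    exact (div_lt_one (by linarith)).2 hp'
  have hlim : (1 - -1 / p : ℝ)⁻¹ = p / (p + 1) := by
    field_simp
    ring
  simpa only [hlim, div_pow, ← Nat.cast_pow] using hasSum_geometric_of_norm_lt_one hnorm

end AlternatingInversion

section NaturalDensity

open scoped Classical in
/-- The counting function of `S`: the number of positive elements of `S` that are at most `n`. -/
noncomputable def countUpTo (S : Set ℕ) (n : ℕ) : ℕ := #{m ∈ Icc 1 n | m ∈ S}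

/-- `S` has natural density `d`: the limit defining the natural density exists and equals `d`. -/
def HasNatDensity (S : Set ℕ) (d : ℝ) : Prop :=
  Tendsto (fun n : ℕ ↦ (countUpTo S n : ℝ) / n) atTop (𝓝 d)

variable {S T : Set ℕ} {d : ℝ} {c : ℕ}

theorem countUpTo_setOf (P : ℕ → Prop) [DecidablePred P] (n : ℕ) :
    countUpTo {m | P m} n = #{m ∈ Icc 1 n | P m} := by
  simp [countUpTo]

theorem countUpTo_zero (S : Set ℕ) : countUpTo S 0 = 0 := by simp [countUpTo]

theorem countUpTo_union (h : Disjoint S T) (n : ℕ) :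
    countUpTo (S ∪ T) n = countUpTo S n + countUpTo T n := by
  classical
  simp only [countUpTo, Set.mem_union, filter_or]
  exact card_union_of_disjoint (disjoint_filter.2 fun _ _ hS hT ↦ h.notMem_of_mem_left hS hT)

theorem countUpTo_image_mul_left (hc : 0 < c) (S : Set ℕ) (n : ℕ) :
    countUpTo ((c * ·) '' S) n = countUpTo S (n / c) := by
  classical
  refine (card_bij (fun m _ ↦ c * m) ?_ (fun _ _ _ _ ↦ Nat.eq_of_mul_eq_mul_left hc) ?_).symm
  · intro m hm
    simp only [mem_filter, mem_Icc, Nat.le_div_iff_mul_le hc] at hm ⊢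
    obtain ⟨⟨hm₁, hmn⟩, hmS⟩ := hm
    exact ⟨⟨Nat.mul_pos hc hm₁, by rwa [mul_comm]⟩, Set.mem_image_of_mem _ hmS⟩
  · intro k hk
    simp only [mem_filter, mem_Icc] at hk
    obtain ⟨⟨hk₁, hkn⟩, m, hmS, rfl⟩ := hk
    refine ⟨m, ?_, rfl⟩
    simp only [mem_filter, mem_Icc, Nat.le_div_iff_mul_le hc]
    exact ⟨⟨Nat.pos_of_mul_pos_left hk₁, by rwa [mul_comm]⟩, hmS⟩

theorem HasNatDensity.image_mul_left (h : HasNatDensity S d) (hc : 0 < c) :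
    HasNatDensity ((c * ·) '' S) (d / c) := by
  simp only [HasNatDensity, countUpTo_image_mul_left hc]
  exact tendsto_comp_div_div_atTop (mod_cast countUpTo_zero S) h c

theorem HasNatDensity.of_union_image_mul_left (hc : 1 < c) (hdisj : Disjoint T ((c * ·) '' T))
    (h : HasNatDensity (T ∪ (c * ·) '' T) d) : HasNatDensity T (d * (c / (c + 1))) := by
  have hcount (n : ℕ) :
      (countUpTo (T ∪ (c * ·) '' T) n : ℝ) = countUpTo T n + countUpTo T (n / c) := by
    rw [countUpTo_union hdisj, countUpTo_image_mul_left (by lia), Nat.cast_add]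
  have hT₀ : (countUpTo T 0 : ℝ) = 0 := mod_cast countUpTo_zero T
  have hsum := hasSum_neg_one_pow_div_pow hc
  rw [← hsum.tsum_eq]
  refine (tendsto_tsum_mul_comp_div_div_atTop (mod_cast countUpTo_zero _) h hsum.summable).congr
    fun n ↦ ?_
  rw [tsum_neg_one_pow_mul_comp_div_pow (g := fun n ↦ (countUpTo T n : ℝ)) hc hT₀ hcount]

end NaturalDensity

section Squarefree

theorem sq_dvd_sq_mul_iff_of_squarefree {a b d : ℕ} (ha : Squarefree a) :
    d ^ 2 ∣ b ^ 2 * a ↔ d ∣ b := by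
  refine ⟨fun h ↦ ?_, fun h ↦ (pow_dvd_pow_of_dvd h 2).mul_right a⟩
  rcases eq_or_ne (d.gcd b) 0 with hg | hg
  · rw [(Nat.gcd_eq_zero_iff.1 hg).2]
    exact dvd_zero d
  obtain ⟨d', b', hcop, hd, hb⟩ := Nat.exists_coprime d b
  have hdvd : d' ^ 2 ∣ b' ^ 2 * a := by
    refine Nat.dvd_of_mul_dvd_mul_right (k := d.gcd b ^ 2) (by positivity) ?_
    rwa [mul_right_comm, ← mul_pow, ← mul_pow, ← hd, ← hb]
  have hunit : IsUnit d' := ha d' (sq d' ▸ (hcop.pow 2 2).dvd_of_dvd_mul_left hdvd)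
  rw [hd, Nat.isUnit_iff.1 hunit, one_mul]
  exact Nat.gcd_dvd_right d b

theorem sum_moebius_divisors (n : ℕ) : ∑ d ∈ n.divisors, μ d = if n = 1 then 1 else 0 := by
  rw [← ArithmeticFunction.coe_zeta_mul_apply, ArithmeticFunction.coe_zeta_mul_moebius,
    ArithmeticFunction.one_apply]

theorem sum_moebius_sq_dvd {n N : ℕ} (hn : 0 < n) (hnN : n ≤ N) :
    ∑ d ∈ Icc 1 N with d ^ 2 ∣ n, μ d = if Squarefree n then 1 else 0 := by
  obtain ⟨a, b, -, hb, rfl, ha⟩ := Nat.sq_mul_squarefree_of_pos hn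
  have hdivisors : {d ∈ Icc 1 N | d ^ 2 ∣ b ^ 2 * a} = b.divisors := by
    ext d
    simp only [mem_filter, mem_Icc, Nat.mem_divisors, sq_dvd_sq_mul_iff_of_squarefree ha]
    refine ⟨fun h ↦ ⟨h.2, hb.ne'⟩, fun h ↦ ⟨⟨Nat.pos_of_dvd_of_pos h.1 hb, ?_⟩, h.1⟩⟩
    calc d ≤ b := Nat.le_of_dvd hb h.1
      _ ≤ b ^ 2 * a := Nat.le_of_dvd hn ((dvd_pow_self b two_ne_zero).mul_right a)
      _ ≤ N := hnN
  have hsquarefree : Squarefree (b ^ 2 * a) ↔ b = 1 := by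
    refine ⟨fun h ↦ Nat.isUnit_iff.1 (h b ⟨a, by ring⟩), ?_⟩
    rintro rfl
    simpa using ha
  simp only [hdivisors, sum_moebius_divisors, hsquarefree]

theorem countUpTo_squarefree (n : ℕ) :
    (countUpTo {m | Squarefree m} n : ℤ) = ∑ d ∈ Icc 1 n, μ d * (n / d ^ 2 : ℕ) := by
  calc (countUpTo {m | Squarefree m} n : ℤ)
      = ∑ m ∈ Icc 1 n, if Squarefree m then 1 else 0 := by
        rw [countUpTo_setOf, natCast_card_filter]
    _ = ∑ m ∈ Icc 1 n, ∑ d ∈ Icc 1 n with d ^ 2 ∣ m, μ d := by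
        refine sum_congr rfl fun m hm ↦ ?_
        rw [sum_moebius_sq_dvd (mem_Icc.1 hm).1 (mem_Icc.1 hm).2]
    _ = ∑ d ∈ Icc 1 n, ∑ m ∈ Icc 1 n with d ^ 2 ∣ m, μ d := by
        simp only [sum_filter]
        exact sum_comm
    _ = ∑ d ∈ Icc 1 n, μ d * (n / d ^ 2 : ℕ) := by
        refine sum_congr rfl fun d _ ↦ ?_
        rw [sum_const, nsmul_eq_mul, mul_comm, ← Nat.Ioc_filter_dvd_card_eq_div n (d ^ 2)]
        rfl

theorem countUpTo_squarefree_eq_tsum (n : ℕ) :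
    (countUpTo {m | Squarefree m} n : ℝ) = ∑' d, (μ d : ℝ) * (n / d ^ 2 : ℕ) := by
  rw [tsum_eq_sum (s := Icc 1 n)]
  · rw [← Int.cast_natCast (R := ℝ), countUpTo_squarefree]
    push_cast
    rfl
  · intro d hd
    rcases Nat.eq_zero_or_pos d with rfl | hd₀
    · simp
    · have : n < d ^ 2 := by
        rw [mem_Icc, not_and, not_le] at hd
        exact (hd hd₀).trans_le (Nat.le_self_pow two_ne_zero d)
      simp [Nat.div_eq_of_lt this]

theorem hasSum_moebius_div_sq :
    HasSum (fun d : ℕ ↦ (μ d : ℝ) / (d ^ 2 : ℕ)) (6 / Real.pi ^ 2) := by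
  have hterm (d : ℕ) :
      LSeries.term (fun n ↦ (μ n : ℂ)) 2 d = (((μ d : ℝ) / (d ^ 2 : ℕ) : ℝ) : ℂ) := by
    rcases eq_or_ne d 0 with rfl | hd
    · simp
    · rw [LSeries.term_of_ne_zero hd]
      norm_cast
  have hLSeries : LSeries (fun n ↦ (μ n : ℂ)) 2 = ((6 / Real.pi ^ 2 : ℝ) : ℂ) := by
    have h := LSeries_one_mul_Lseries_moebius (s := 2) (by norm_num)
    rw [LSeries_one_eq_riemannZeta (by norm_num), riemannZeta_two] at h
    push_cast
    rw [eq_inv_of_mul_eq_one_right h, inv_div]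
  have h := (ArithmeticFunction.LSeriesSummable_moebius_iff.2
    (show 1 < (2 : ℂ).re by norm_num)).LSeriesHasSum
  rw [hLSeries, LSeriesHasSum, funext hterm] at h
  exact Complex.hasSum_ofReal.1 h

theorem hasNatDensity_squarefree : HasNatDensity {m | Squarefree m} (6 / Real.pi ^ 2) := by
  have hid : Tendsto (fun n : ℕ ↦ (n : ℝ) / n) atTop (𝓝 1) := by
    simpa using tendsto_natCast_div_div_atTop 1
  have hsum := hasSum_moebius_div_sq
  have h := tendsto_tsum_mul_comp_div_div_atTop Nat.cast_zero hid hsum.summable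
  rw [hsum.tsum_eq, one_mul] at h
  exact h.congr fun n ↦ by rw [countUpTo_squarefree_eq_tsum]

end Squarefree

section SquarefreeCoprime

/-- The squarefree numbers coprime to `k`. -/
def squarefreeCoprime (k : ℕ) : Set ℕ := {m | Squarefree m ∧ m.Coprime k}

variable {p k : ℕ}

theorem squarefreeCoprime_mul_of_dvd (h : p ∣ k) :
    squarefreeCoprime (p * k) = squarefreeCoprime k := by
  ext m
  simp only [squarefreeCoprime, Set.mem_ofPred_eq, Nat.coprime_mul_iff_right]
  exact and_congr_right fun _ ↦ and_iff_right_of_imp (Nat.Coprime.coprime_dvd_right h)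

theorem disjoint_squarefreeCoprime_image_mul_left (hp : p.Prime) :
    Disjoint (squarefreeCoprime (p * k)) ((p * ·) '' squarefreeCoprime (p * k)) := by
  rw [Set.disjoint_right]
  rintro _ ⟨m, -, rfl⟩ ⟨-, hcop⟩
  exact Nat.not_coprime_of_dvd_of_dvd hp.one_lt (dvd_mul_right p m) (dvd_mul_right p k) hcop

theorem mul_mem_squarefreeCoprime_iff (hp : p.Prime) (hpk : ¬p ∣ k) {m : ℕ} :
    p * m ∈ squarefreeCoprime k ↔ m ∈ squarefreeCoprime (p * k) := by
  have hpk' : p.Coprime k := hp.coprime_iff_not_dvd.2 hpk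
  simp only [squarefreeCoprime, Set.mem_ofPred_eq, Nat.squarefree_mul_iff,
    Nat.coprime_mul_iff_left, Nat.coprime_mul_iff_right, hp.prime.squarefree,
    Nat.coprime_comm (n := m) (m := p)]
  tauto

theorem squarefreeCoprime_mul_union_image_mul_left (hp : p.Prime) (hpk : ¬p ∣ k) :
    squarefreeCoprime (p * k) ∪ (p * ·) '' squarefreeCoprime (p * k) = squarefreeCoprime k := by
  apply Set.Subset.antisymm
  · rintro m (⟨hsq, hcop⟩ | ⟨m, hm, rfl⟩)
    · exact ⟨hsq, hcop.coprime_mul_left_right⟩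
    · exact (mul_mem_squarefreeCoprime_iff hp hpk).2 hm
  · rintro m ⟨hsq, hcop⟩
    by_cases hpm : p ∣ m
    · obtain ⟨m, rfl⟩ := hpm
      exact .inr ⟨m, (mul_mem_squarefreeCoprime_iff hp hpk).1 ⟨hsq, hcop⟩, rfl⟩
    · exact .inl ⟨hsq, (hp.coprime_iff_not_dvd.2 hpm).symm.mul_right hcop⟩

theorem hasNatDensity_squarefreeCoprime (hk : k ≠ 0) :
    HasNatDensity (squarefreeCoprime k)
      (6 / Real.pi ^ 2 * ∏ p ∈ k.primeFactors, (p : ℝ) / (p + 1)) := by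
  induction k using induction_on_primes with
  | zero => contradiction
  | one => simpa [squarefreeCoprime] using hasNatDensity_squarefree
  | prime_mul p k hp ih =>
    have hk₀ : k ≠ 0 := right_ne_zero_of_mul hk
    rw [Nat.primeFactors_mul hp.ne_zero hk₀, hp.primeFactors, ← insert_eq]
    by_cases hpk : p ∣ k
    · rw [squarefreeCoprime_mul_of_dvd hpk,
        insert_eq_of_mem (Nat.mem_primeFactors.2 ⟨hp, hpk, hk₀⟩)]
      exact ih hk₀
    · rw [prod_insert (fun h ↦ hpk (Nat.dvd_of_mem_primeFactors h)),
        mul_comm ((p : ℝ) / (p + 1)), ← mul_assoc]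
      apply HasNatDensity.of_union_image_mul_left hp.one_lt
        (disjoint_squarefreeCoprime_image_mul_left hp)
      rw [squarefreeCoprime_mul_union_image_mul_left hp hpk]
      exact ih hk₀

end SquarefreeCoprime

section Radical

variable {a s q : ℕ}

theorem sqfreeKernel_eq_radical (n : ℕ) : sqfreeKernel n = radical n :=
  Nat.radical_eq_prod_primeFactors.symm

theorem radical_mul_of_squarefree_of_radical_dvd (ha : a ≠ 0) (hs : Squarefree s)
    (h : radical a ∣ s) : radical (a * s) = s := by
  have hsub : a.primeFactors ⊆ s.primeFactors := (Nat.radical_dvd_iff hs.ne_zero).1 h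
  rw [Nat.radical_eq_prod_primeFactors, Nat.primeFactors_mul ha hs.ne_zero,
    union_eq_right.2 hsub, Nat.prod_primeFactors_of_squarefree hs]

theorem coprime_radical_right_iff (hq : q ≠ 0) : a.Coprime (radical q) ↔ a.Coprime q :=
  ⟨fun h ↦ (h.pow_right q).coprime_dvd_right (Nat.dvd_radical_pow_self hq),
    fun h ↦ h.coprime_dvd_right radical_dvd_self⟩

theorem setOf_div_radical_eq (hq : q ≠ 0) :
    {n | n / radical n = q} = (q * radical q * ·) '' squarefreeCoprime q := by
  ext n
  rw [Set.mem_ofPred_eq, Nat.div_eq_iff_eq_mul_left (Nat.radical_pos n) radical_dvd_self]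
  constructor
  · intro hn
    have hn₀ : n ≠ 0 := by
      rintro rfl
      simp [hq.symm] at hn
    obtain ⟨m, hm⟩ : radical q ∣ radical n := radical_dvd_radical ⟨_, hn⟩ hn₀
    have hs : Squarefree (radical q * m) := hm ▸ squarefree_radical
    obtain ⟨hcop, -, hsq⟩ := Nat.squarefree_mul_iff.1 hs
    refine ⟨m, ⟨hsq, (coprime_radical_right_iff hq).1 hcop.symm⟩, ?_⟩
    rw [hm, ← mul_assoc] at hn
    exact hn.symm
  · rintro ⟨m, ⟨hsq, hcop⟩, rfl⟩
    have hs : Squarefree (radical q * m) := Nat.squarefree_mul_iff.2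
      ⟨((coprime_radical_right_iff hq).2 hcop).symm, squarefree_radical, hsq⟩
    simp only [mul_assoc]
    rw [radical_mul_of_squarefree_of_radical_dvd hq hs (dvd_mul_right _ m)]

theorem prod_primeFactors_div_add_one (q : ℕ) :
    ∏ p ∈ q.primeFactors, (p : ℝ) / (p + 1)
      = radical q * ∏ p ∈ q.primeFactors, (1 : ℝ) / (p + 1) := by
  rw [Nat.radical_eq_prod_primeFactors, Nat.cast_prod, ← prod_mul_distrib]
  simp only [mul_one_div]

end Radical

theorem stmt7 (q : ℕ) (hq : 0 < q) :
    Tendsto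
      (fun X : ℕ =>
        (((Finset.Icc 1 X).filter (fun n => n / sqfreeKernel n = q)).card : ℝ) / X)
      atTop
      (nhds ((6 / Real.pi ^ 2) * (1 / q) * ∏ p ∈ q.primeFactors, (1 : ℝ) / (p + 1))) := by
  have hdensity : HasNatDensity {n | n / radical n = q}
      ((6 / Real.pi ^ 2 * ∏ p ∈ q.primeFactors, (p : ℝ) / (p + 1)) / (q * radical q : ℕ)) := by
    rw [setOf_div_radical_eq hq.ne']
    exact (hasNatDensity_squarefreeCoprime hq.ne').image_mul_left
      (Nat.mul_pos hq (Nat.radical_pos q))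
  have hconst : (6 / Real.pi ^ 2 * ∏ p ∈ q.primeFactors, (p : ℝ) / (p + 1)) / (q * radical q : ℕ)
      = 6 / Real.pi ^ 2 * (1 / q) * ∏ p ∈ q.primeFactors, (1 : ℝ) / (p + 1) := by
    have hrad : ((radical q : ℕ) : ℝ) ≠ 0 := mod_cast (Nat.radical_pos q).ne'
    rw [prod_primeFactors_div_add_one, Nat.cast_mul]
    field_simp
  rw [hconst] at hdensity
  simpa only [HasNatDensity, countUpTo_setOf, ← sqfreeKernel_eq_radical] using hdensity
end

section
/- The function g(t) = 2^{1/3}·π·(t−t²)^{1/6} / agm(1, √t) on (0,1) extends continuously by 0 at t = 0 and t = 1, and attains a maximum value less than 4.414499094 on [0,1]; moreover g(t) → 0 as t → 0⁺ and as t → 1⁻. -/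
open Filter Set

/-- The AGM iteration: `agmSeq a b n` is the pair `(aₙ, bₙ)`. -/
noncomputable def agmSeq (a b : ℝ) : ℕ → ℝ × ℝ
  | 0 => (a, b)
  | n + 1 => (((agmSeq a b n).1 + (agmSeq a b n).2) / 2,
      Real.sqrt ((agmSeq a b n).1 * (agmSeq a b n).2))

/-- The arithmetic–geometric mean of `a` and `b`. -/
noncomputable def agm (a b : ℝ) : ℝ := limUnder atTop (fun n => (agmSeq a b n).1)

noncomputable def g (t : ℝ) : ℝ :=
  2 ^ ((1 : ℝ) / 3) * Real.pi * (t - t ^ 2) ^ ((1 : ℝ) / 6) / agm 1 (Real.sqrt t)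

/-! Write `(aₙ, bₙ)` for the AGM iteration of `(1, √t)` and parametrize `√a₁ = σ (1 + s)`,
`√b₁ = σ (1 - s)`. Homogeneity and two more AGM steps give
`agm 1 √t = σ² · agm 1 √(1 - s⁴) ≥ σ² · (1 - s⁴) ^ (1 / 4)`, a bound with relative error `O(s⁸)`.
Since `t - t²` is algebraic in `s` and `σ`, the powers of `σ` cancel and
`g t ^ 12 ≤ 2048 π ^ 12 · s (1 - s) ^ 13 (1 + s) / (1 + s²)²`.
The right-hand side vanishes at `s = 1`, that is `t = 0`, which gives the limit there; at `t = 1`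
the function `g` is continuous. Its maximum over `[0, 1]`, near `s = 0.07455`, is bounded through
the tangent line of its logarithm. -/

open Real
open scoped NNReal Topology

section Agm

lemma agmSeq_succ_coe (x y : ℝ≥0) (n : ℕ) :
    agmSeq x y (n + 1) =
      (((NNReal.agmSequences x y n).2 : ℝ), ((NNReal.agmSequences x y n).1 : ℝ)) := by
  induction n with
  | zero => simp [agmSeq]
  | succ n ih =>
    rw [agmSeq, ih, NNReal.agmSequences_succ']
    simp [mul_comm, add_comm]

lemma agm_coe (x y : ℝ≥0) : agm x y = (NNReal.agm x y : ℝ) := by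
  refine Tendsto.limUnder_eq ((tendsto_add_atTop_iff_nat 1).1 ?_)
  simp only [agmSeq_succ_coe]
  exact NNReal.tendsto_coe.2 NNReal.tendsto_agmSequences_snd_agm

variable {a b : ℝ}

lemma agm_nonneg (ha : 0 ≤ a) (hb : 0 ≤ b) : 0 ≤ agm a b := by
  lift a to ℝ≥0 using ha
  lift b to ℝ≥0 using hb
  rw [agm_coe]
  exact NNReal.coe_nonneg _

lemma agm_pos (ha : 0 < a) (hb : 0 < b) : 0 < agm a b := by
  lift a to ℝ≥0 using ha.le
  lift b to ℝ≥0 using hb.le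
  rw [agm_coe]
  exact_mod_cast NNReal.agm_pos (by exact_mod_cast ha) (by exact_mod_cast hb)

lemma agm_eq_agm_am_gm (ha : 0 ≤ a) (hb : 0 ≤ b) : agm a b = agm ((a + b) / 2) √(a * b) := by
  lift a to ℝ≥0 using ha
  lift b to ℝ≥0 using hb
  have h := agm_coe ((a + b) / 2) (NNReal.sqrt (a * b))
  rw [NNReal.agm_comm, ← NNReal.agm_eq_agm_gm_am, ← agm_coe] at h
  push_cast at h
  exact h.symm

lemma sqrt_mul_le_agm (ha : 0 ≤ a) (hb : 0 ≤ b) : √(a * b) ≤ agm a b := by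
  lift a to ℝ≥0 using ha
  lift b to ℝ≥0 using hb
  rw [agm_coe, ← NNReal.coe_mul, ← coe_sqrt, NNReal.coe_le_coe]
  exact NNReal.agmSequences_fst_le_agm 0

lemma agm_mul_distrib {k : ℝ} (hk : 0 ≤ k) (ha : 0 ≤ a) (hb : 0 ≤ b) :
    agm (k * a) (k * b) = k * agm a b := by
  lift a to ℝ≥0 using ha
  lift b to ℝ≥0 using hb
  lift k to ℝ≥0 using hk
  rw [agm_coe]
  exact_mod_cast (agm_coe (k * a) (k * b)).trans (congrArg _ NNReal.agm_mul_distrib)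

lemma continuous_agmSequences (n : ℕ) :
    Continuous fun z : ℝ≥0 × ℝ≥0 ↦ NNReal.agmSequences z.1 z.2 n :=
  Continuous.iterate (by fun_prop) (n + 1)

lemma continuous_nnreal_agm : Continuous fun z : ℝ≥0 × ℝ≥0 ↦ NNReal.agm z.1 z.2 := by
  refine continuous_iff_lower_upperSemicontinuous.2 ⟨?_, ?_⟩
  · simp only [NNReal.agm_eq_ciSup]
    exact lowerSemicontinuous_ciSup (fun _ ↦ NNReal.bddAbove_range_agmSequences_fst)
      fun n ↦ (continuous_agmSequences n).fst.lowerSemicontinuous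
  · simp only [NNReal.agm_eq_ciInf]
    exact upperSemicontinuous_ciInf (fun _ ↦ OrderBot.bddBelow _)
      fun n ↦ (continuous_agmSequences n).snd.upperSemicontinuous

lemma continuousOn_agm : ContinuousOn (fun z : ℝ × ℝ ↦ agm z.1 z.2) (Ici 0 ×ˢ Ici 0) := by
  have hpair : Continuous fun z : ℝ × ℝ ↦ (z.1.toNNReal, z.2.toNNReal) := by fun_prop
  refine (NNReal.continuous_coe.comp (continuous_nnreal_agm.comp hpair)).continuousOn.congr ?_
  rintro ⟨a, b⟩ ⟨ha, hb⟩
  lift a to ℝ≥0 using ha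
  lift b to ℝ≥0 using hb
  simp only [Function.comp_apply, Real.toNNReal_coe, agm_coe]

end Agm

section Landen

lemma agm_one_pow_four {p q : ℝ} (hpq : 1 + q ^ 4 = 2 * p ^ 2) :
    agm 1 (q ^ 4) = agm (p ^ 2) (q ^ 2) := by
  have hp : (1 + q ^ 4) / 2 = p ^ 2 := by linarith
  have hq : √(1 * q ^ 4) = q ^ 2 := by
    rw [one_mul, show q ^ 4 = (q ^ 2) ^ 2 by ring, sqrt_sq (sq_nonneg q)]
  rw [agm_eq_agm_am_gm zero_le_one (by positivity), hp, hq]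

lemma agm_one_add_sq_one_sub_sq {s : ℝ} (hs : s ^ 2 ≤ 1) :
    agm ((1 + s) ^ 2) ((1 - s) ^ 2) = agm 1 √(1 - s ^ 4) := by
  have hgm : √((1 + s) ^ 2 * (1 - s) ^ 2) = 1 - s ^ 2 := by
    rw [show (1 + s) ^ 2 * (1 - s) ^ 2 = (1 - s ^ 2) ^ 2 by ring, sqrt_sq (by linarith)]
  rw [agm_eq_agm_am_gm (by positivity) (by positivity), hgm,
    agm_eq_agm_am_gm (by positivity) (by linarith)]
  congr 2 <;> ring

lemma one_sub_pow_four_le_agm_pow_four {s : ℝ} (hs : s ^ 2 ≤ 1) :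
    1 - s ^ 4 ≤ agm ((1 + s) ^ 2) ((1 - s) ^ 2) ^ 4 := by
  have hs4 : 0 ≤ 1 - s ^ 4 := by nlinarith [sq_nonneg s]
  calc 1 - s ^ 4 = (√(1 * √(1 - s ^ 4)) ^ 2) ^ 2 := by
        rw [one_mul, sq_sqrt (sqrt_nonneg _), sq_sqrt hs4]
    _ = √(1 * √(1 - s ^ 4)) ^ 4 := by ring
    _ ≤ agm 1 √(1 - s ^ 4) ^ 4 := by
        gcongr
        exact sqrt_mul_le_agm zero_le_one (sqrt_nonneg _)
    _ = agm ((1 + s) ^ 2) ((1 - s) ^ 2) ^ 4 := by rw [agm_one_add_sq_one_sub_sq hs]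

/-- The parameter `s` at which `g t ^ 12` is bounded by a rational function of `s`: if `(aₙ, bₙ)` is
the AGM iteration of `(1, √t)`, then `s = (√a₁ - √b₁) / (√a₁ + √b₁)`. -/
noncomputable def landenParam (t : ℝ) : ℝ :=
  (√((1 + √t) / 2) - √√√t) / (√((1 + √t) / 2) + √√√t)

lemma continuous_landenParam : Continuous landenParam :=
  Continuous.div (by fun_prop) (by fun_prop) fun t ↦ by positivity

lemma landenParam_zero : landenParam 0 = 1 := by simp [landenParam]

lemma exists_scale_landenParam {t : ℝ} (ht : 0 < t) :
    ∃ σ : ℝ, 0 < σ ∧ t = (σ * (1 - landenParam t)) ^ 8 ∧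
      1 + (σ * (1 - landenParam t)) ^ 4 = 2 * (σ * (1 + landenParam t)) ^ 2 := by
  have hp2 : √((1 + √t) / 2) ^ 2 = (1 + √t) / 2 := sq_sqrt (by positivity)
  have hq4 : √√√t ^ 4 = √t := by
    rw [show 4 = 2 * 2 from rfl, pow_mul, sq_sqrt (by positivity), sq_sqrt (by positivity)]
  rw [landenParam]
  set p := √((1 + √t) / 2)
  set q := √√√t
  have hp : 0 < p := by positivity
  have hq : 0 < q := by positivity
  have hp_eq : (p + q) / 2 * (1 + (p - q) / (p + q)) = p := by field_simp; ring
  have hq_eq : (p + q) / 2 * (1 - (p - q) / (p + q)) = q := by field_simp; ring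
  refine ⟨(p + q) / 2, by positivity, ?_, ?_⟩
  · rw [hq_eq, show q ^ 8 = (q ^ 4) ^ 2 by ring, hq4, sq_sqrt ht.le]
  · rw [hp_eq, hq_eq, hq4, hp2]
    ring

lemma landenParam_mem_Ico {t : ℝ} (ht : 0 < t) : landenParam t ∈ Ico 0 1 := by
  have hq : 0 < √√√t := by positivity
  have hqp : √√√t ≤ √((1 + √t) / 2) := by
    refine sqrt_le_sqrt ?_
    nlinarith [sq_sqrt (sqrt_nonneg t), sq_nonneg (√√t - 1)]
  exact ⟨div_nonneg (sub_nonneg.2 hqp) (by positivity),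
    (div_lt_one (by positivity)).2 (by linarith)⟩

end Landen

section Majorant

/-- The rational function of the Landen parameter `s` which, multiplied by `2048 π ^ 12`, is a
majorant of `g ^ 12`. -/
noncomputable def landenMajorant (s : ℝ) : ℝ := s * (1 - s) ^ 13 * (1 + s) / (1 + s ^ 2) ^ 2

lemma continuous_landenMajorant : Continuous landenMajorant :=
  Continuous.div (by fun_prop) (by fun_prop) fun s ↦ by positivity

lemma landenMajorant_nonneg {s : ℝ} (hs : s ∈ Icc 0 1) : 0 ≤ landenMajorant s := by
  have hs0 : 0 ≤ s := hs.1
  have hs1 : 0 ≤ 1 - s := sub_nonneg.2 hs.2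
  rw [landenMajorant]
  positivity

lemma le_mul_exp_sub_div {c : ℝ} (hc : 0 < c) (x : ℝ) : x ≤ c * exp ((x - c) / c) :=
  calc x = c * ((x - c) / c + 1) := by field_simp; ring
    _ ≤ c * exp ((x - c) / c) := by gcongr; exact add_one_le_exp _

lemma one_add_sq_le_mul_exp {c s : ℝ} (hcs : c ^ 2 + 2 * c * s ≤ 1) :
    1 + c ^ 2 ≤ (1 + s ^ 2) * exp (-(2 * c * (s - c) / (1 + c ^ 2))) := by
  have hgap : (1 + s ^ 2) * (-(2 * c * (s - c) / (1 + c ^ 2)) + 1) - (1 + c ^ 2) =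
      (s - c) ^ 2 * (1 - (c ^ 2 + 2 * c * s)) / (1 + c ^ 2) := by
    field_simp
    ring
  have hgap_nonneg : 0 ≤ (s - c) ^ 2 * (1 - (c ^ 2 + 2 * c * s)) / (1 + c ^ 2) := by
    have := sub_nonneg.2 hcs
    positivity
  calc 1 + c ^ 2 ≤ (1 + s ^ 2) * (-(2 * c * (s - c) / (1 + c ^ 2)) + 1) := by linarith
    _ ≤ (1 + s ^ 2) * exp (-(2 * c * (s - c) / (1 + c ^ 2))) := by
        gcongr
        exact add_one_le_exp _

-- The graph of `log landenMajorant` lies below its tangent at `c`.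
lemma landenMajorant_le_mul_exp {c s : ℝ} (hc : 0 < c) (hc' : c ^ 2 + 2 * c ≤ 1)
    (hs : s ∈ Icc 0 1) :
    landenMajorant s ≤ landenMajorant c *
      exp ((1 / c - 13 / (1 - c) + 1 / (1 + c) - 4 * c / (1 + c ^ 2)) * (s - c)) := by
  have hc1 : 0 < 1 - c := by nlinarith
  have hs1 : 0 ≤ 1 - s := sub_nonneg.2 hs.2
  have hs0 : 0 ≤ s := hs.1
  set L := 1 / c - 13 / (1 - c) + 1 / (1 + c) - 4 * c / (1 + c ^ 2) with hL
  have hexp : exp (L * (s - c)) = exp ((s - c) / c) * exp (((1 - s) - (1 - c)) / (1 - c)) ^ 13 *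
      exp (((1 + s) - (1 + c)) / (1 + c)) * exp (-(2 * c * (s - c) / (1 + c ^ 2))) ^ 2 := by
    rw [← exp_nat_mul, ← exp_nat_mul, ← exp_add, ← exp_add, ← exp_add, hL]
    congr 1
    push_cast
    ring
  rw [landenMajorant, landenMajorant, div_mul_eq_mul_div, div_le_div_iff₀ (by positivity)
    (by positivity), hexp]
  calc s * (1 - s) ^ 13 * (1 + s) * (1 + c ^ 2) ^ 2
      ≤ (c * exp ((s - c) / c)) * ((1 - c) * exp (((1 - s) - (1 - c)) / (1 - c))) ^ 13 *
        ((1 + c) * exp (((1 + s) - (1 + c)) / (1 + c))) *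
        ((1 + s ^ 2) * exp (-(2 * c * (s - c) / (1 + c ^ 2)))) ^ 2 := by
        gcongr
        · exact le_mul_exp_sub_div hc s
        · exact le_mul_exp_sub_div hc1 (1 - s)
        · exact le_mul_exp_sub_div (by positivity) (1 + s)
        · exact one_add_sq_le_mul_exp (by nlinarith)
    _ = _ := by ring

lemma landenMajorant_lt {s : ℝ} (hs : s ∈ Icc 0 1) :
    2048 * π ^ 12 * landenMajorant s < 4.414499094 ^ 12 := by
  -- The maximum point of `landenMajorant`, rounded up so that its logarithmic derivative is
  -- slightly negative; the margin in the claim forces this many digits.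
  obtain ⟨c, hc⟩ : ∃ c : ℝ, c = 0.074553332783 := ⟨_, rfl⟩
  have htangent := landenMajorant_le_mul_exp (c := c) (by norm_num [hc]) (by norm_num [hc]) hs
  set L := 1 / c - 13 / (1 - c) + 1 / (1 + c) - 4 * c / (1 + c ^ 2)
  have hL_nonpos : L ≤ 0 := by norm_num [L, hc]
  have hL_lower : -(2 / 10 ^ 10) ≤ L := by norm_num [L, hc]
  have hexp : exp (L * (s - c)) ≤ 1 / (1 - 2 / 10 ^ 11) :=
    calc exp (L * (s - c)) ≤ exp (2 / 10 ^ 11) := by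
          gcongr
          nlinarith [hs.1]
      _ ≤ 1 / (1 - 2 / 10 ^ 11) := exp_bound_div_one_sub_of_interval (by norm_num) (by norm_num)
  have hc_nonneg : 0 ≤ landenMajorant c := landenMajorant_nonneg (by norm_num [hc])
  have hs_nonneg : 0 ≤ landenMajorant s := landenMajorant_nonneg hs
  calc 2048 * π ^ 12 * landenMajorant s
      ≤ 2048 * 3.14159265358979323847 ^ 12 * (landenMajorant c * (1 / (1 - 2 / 10 ^ 11))) := by
        gcongr
        · exact pi_lt_d20.le
        · exact htangent.trans (by gcongr)
    _ < 4.414499094 ^ 12 := by norm_num [landenMajorant, hc]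

end Majorant

section Bound

variable {t : ℝ}

lemma g_zero : g 0 = 0 := by simp [g]

lemma g_one : g 1 = 0 := by simp [g]

lemma g_nonneg (ht : t ∈ Icc 0 1) : 0 ≤ g t := by
  have hagm : 0 ≤ agm 1 √t := agm_nonneg zero_le_one (sqrt_nonneg t)
  have hdisc : 0 ≤ t - t ^ 2 := by nlinarith [ht.1, ht.2]
  rw [g]
  positivity

lemma g_pow_twelve (ht : t ∈ Icc 0 1) :
    g t ^ 12 = 16 * π ^ 12 * (t - t ^ 2) ^ 2 / agm 1 √t ^ 12 := by
  have htwo : ((2 : ℝ) ^ ((1 : ℝ) / 3)) ^ 12 = 16 := by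
    rw [← rpow_natCast, ← rpow_mul zero_le_two]
    norm_num
  have hdisc : ((t - t ^ 2) ^ ((1 : ℝ) / 6)) ^ 12 = (t - t ^ 2) ^ 2 := by
    rw [← rpow_natCast, ← rpow_mul (by nlinarith [ht.1, ht.2]), ← rpow_natCast]
    norm_num
  rw [g, div_pow, mul_pow, mul_pow, htwo, hdisc]

lemma pow_eight_sub_sq_sq_eq {p q : ℝ} (hpq : 1 + q ^ 4 = 2 * p ^ 2) :
    (q ^ 8 - (q ^ 8) ^ 2) ^ 2 = 16 * q ^ 16 * p ^ 4 * (p ^ 4 - q ^ 4) := by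
  linear_combination
    q ^ 16 * ((1 + q ^ 4) ^ 2 + 4 * p ^ 4 - 4 * q ^ 4) * (1 + q ^ 4 + 2 * p ^ 2) * hpq

lemma g_pow_twelve_le_landenMajorant (ht : t ∈ Ioc 0 1) :
    g t ^ 12 ≤ 2048 * π ^ 12 * landenMajorant (landenParam t) := by
  have hs := landenParam_mem_Ico ht.1
  obtain ⟨σ, hσ, htσ, hnorm⟩ := exists_scale_landenParam ht.1
  set s := landenParam t
  have hs0 : 0 ≤ s := hs.1
  have hs1 : 0 < 1 - s := sub_pos.2 hs.2
  have hs2 : 0 < 1 - s ^ 4 := sub_pos.2 (pow_lt_one₀ hs.1 hs.2 four_ne_zero)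
  have hagm : agm 1 √t = σ ^ 2 * agm ((1 + s) ^ 2) ((1 - s) ^ 2) := by
    have hsqrt : √t = (σ * (1 - s)) ^ 4 := by
      rw [htσ, show (σ * (1 - s)) ^ 8 = ((σ * (1 - s)) ^ 4) ^ 2 by ring, sqrt_sq (by positivity)]
    rw [hsqrt, agm_one_pow_four hnorm, mul_pow, mul_pow,
      agm_mul_distrib (by positivity) (by positivity) (by positivity)]
  have hagm_lower : σ ^ 24 * (1 - s ^ 4) ^ 3 ≤ agm 1 √t ^ 12 := by
    calc σ ^ 24 * (1 - s ^ 4) ^ 3 ≤ σ ^ 24 * (agm ((1 + s) ^ 2) ((1 - s) ^ 2) ^ 4) ^ 3 := by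
          gcongr
          exact one_sub_pow_four_le_agm_pow_four (by nlinarith [hs.2])
      _ = agm 1 √t ^ 12 := by rw [hagm]; ring
  have hdisc : (t - t ^ 2) ^ 2 = 128 * σ ^ 24 * s * (1 - s) ^ 16 * (1 + s) ^ 4 * (1 + s ^ 2) := by
    rw [htσ, pow_eight_sub_sq_sq_eq hnorm]
    ring
  calc g t ^ 12 = 16 * π ^ 12 * (t - t ^ 2) ^ 2 / agm 1 √t ^ 12 :=
        g_pow_twelve (Ioc_subset_Icc_self ht)
    _ ≤ 16 * π ^ 12 * (t - t ^ 2) ^ 2 / (σ ^ 24 * (1 - s ^ 4) ^ 3) := by gcongr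
    _ = 2048 * π ^ 12 * landenMajorant s := by
        rw [hdisc, landenMajorant, show 1 - s ^ 4 = (1 - s) * (1 + s) * (1 + s ^ 2) by ring]
        field_simp
        ring

lemma g_lt (ht : t ∈ Icc 0 1) : g t < 4.414499094 := by
  rcases ht.1.eq_or_lt with rfl | ht0
  · norm_num [g_zero]
  · exact lt_of_pow_lt_pow_left₀ 12 (by norm_num)
      ((g_pow_twelve_le_landenMajorant ⟨ht0, ht.2⟩).trans_lt
        (landenMajorant_lt (Ico_subset_Icc_self (landenParam_mem_Ico ht0))))

end Bound

section Continuity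

lemma continuousAt_g {t : ℝ} (ht : 0 < t) : ContinuousAt g t := by
  have hnum : Continuous fun t : ℝ ↦ 2 ^ ((1 : ℝ) / 3) * π * (t - t ^ 2) ^ ((1 : ℝ) / 6) :=
    continuous_const.mul (Continuous.rpow_const (by fun_prop) fun _ ↦ Or.inr (by norm_num))
  have hagm : Continuous fun t : ℝ ↦ agm 1 √t :=
    continuousOn_agm.comp_continuous (f := fun t : ℝ ↦ (1, √t)) (by fun_prop)
      fun t ↦ ⟨zero_le_one' ℝ, sqrt_nonneg t⟩
  exact hnum.continuousAt.div hagm.continuousAt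
    (agm_pos one_pos (sqrt_pos.2 ht)).ne'

lemma tendsto_g_nhdsGT_zero : Tendsto g (𝓝[>] 0) (𝓝 0) := by
  have hbound : Tendsto (fun t ↦ (2048 * π ^ 12 * landenMajorant (landenParam t)) ^ (12⁻¹ : ℝ))
      (𝓝[>] 0) (𝓝 0) := by
    have hcont : Continuous fun t ↦
        (2048 * π ^ 12 * landenMajorant (landenParam t)) ^ (12⁻¹ : ℝ) :=
      (continuous_const.mul (continuous_landenMajorant.comp continuous_landenParam)).rpow_const
        fun _ ↦ Or.inr (by norm_num)
    refine (hcont.tendsto' 0 0 ?_).mono_left nhdsWithin_le_nhds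
    norm_num [landenParam_zero, landenMajorant]
  refine squeeze_zero' ?_ ?_ hbound
  all_goals filter_upwards [Ioc_mem_nhdsGT one_pos] with t ht
  · exact g_nonneg (Ioc_subset_Icc_self ht)
  · have hg := g_nonneg (Ioc_subset_Icc_self ht)
    have hle := g_pow_twelve_le_landenMajorant ht
    refine (le_rpow_inv_iff_of_pos hg ((pow_nonneg hg 12).trans hle) (by norm_num)).2 ?_
    exact_mod_cast hle

lemma continuousOn_g : ContinuousOn g (Icc 0 1) := by
  intro t ht
  rcases ht.1.eq_or_lt with rfl | ht0
  · have hIoi : ContinuousWithinAt g (Ioi 0) 0 := by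
      simpa only [ContinuousWithinAt, g_zero] using tendsto_g_nhdsGT_zero
    exact (continuousWithinAt_Ioi_iff_Ici.1 hIoi).mono Icc_subset_Ici_self
  · exact (continuousAt_g ht0).continuousWithinAt

lemma tendsto_g_nhdsLT_one : Tendsto g (𝓝[<] 1) (𝓝 0) := by
  have h := (continuousAt_g one_pos).tendsto
  rw [g_one] at h
  exact h.mono_left nhdsWithin_le_nhds

end Continuity

theorem stmt16 :
    Tendsto g (nhdsWithin 0 (Ioi 0)) (nhds 0) ∧
    Tendsto g (nhdsWithin 1 (Iio 1)) (nhds 0) ∧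
    ∃ t₀ ∈ Icc (0 : ℝ) 1, (∀ t ∈ Icc (0 : ℝ) 1, g t ≤ g t₀) ∧ g t₀ < 4.414499094 := by
  obtain ⟨t₀, ht₀, hmax⟩ :=
    isCompact_Icc.exists_isMaxOn (nonempty_Icc.2 zero_le_one) continuousOn_g
  exact ⟨tendsto_g_nhdsGT_zero, tendsto_g_nhdsLT_one, t₀, ht₀, fun _ ht ↦ hmax ht, g_lt ht₀⟩
end
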